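/- The space of polygons with given angles is a submanifold of codimension three (de Sitter analogue of Schlenker's Theorem A): with B, R, X, G, Pᵢ as in the holonomy setup, let ℓ : Fin n → ℝ satisfy G(ℓ) = 1, and define wᵢ = (Pᵢ(ℓ)).mulVec ![0,0,1] ∈ ℝ³ for each i. Then: (a) the Fréchet derivative D of G at ℓ satisfies ker D = {ℓ̇ : Fin n → ℝ : ∑ i, (ℓ̇ i) • wᵢ = 0}; (b) if w₀, …, w_{n−1} span ℝ³, then D has rank 3, and there is an open neighborhood U of ℓ in ℝⁿ such that G⁻¹({1}) ∩ U is a smooth submanifold of ℝⁿ of dimension n − 3, whose tangent space at ℓ is {ℓ̇ : ∑ i, (ℓ̇ i) • wᵢ = 0}. -/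

import Mathlib

open Real Matrix

noncomputable section

attribute [local instance] Matrix.normedAddCommGroup Matrix.normedSpace

/-- Hyperbolic translation of length `t` along a geodesic through the base point. -/
def Bmat (t : ℝ) : Matrix (Fin 3) (Fin 3) ℝ :=
  ![![Real.cosh t, Real.sinh t, 0], ![Real.sinh t, Real.cosh t, 0], ![0, 0, 1]]

/-- Rotation by `θ` about the base point `(1,0,0)` of the hyperboloid. -/
def Rmat (θ : ℝ) : Matrix (Fin 3) (Fin 3) ℝ :=
  ![![1, 0, 0], ![0, Real.cos θ, -Real.sin θ], ![0, Real.sin θ, Real.cos θ]]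

/-- The infinitesimal translation `X = B'(0)`. -/
def Xmat : Matrix (Fin 3) (Fin 3) ℝ := ![![0, 1, 0], ![1, 0, 0], ![0, 0, 0]]

/-- Ordered product of the first `k` factors `B (ℓ j) * R (π - β j)`. -/
def partialProd (n : ℕ) (β : Fin n → ℝ) (ℓ : Fin n → ℝ) : ℕ → Matrix (Fin 3) (Fin 3) ℝ
  | 0 => 1
  | k + 1 => partialProd n β ℓ k *
      (if h : k < n then Bmat (ℓ ⟨k, h⟩) * Rmat (π - β ⟨k, h⟩) else 1)

/-- The holonomy of the polygonal path with edge lengths `ℓ` and angles `β`: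
the ordered product `∏_{i=0}^{n-1} B (ℓ i) * R (π - β i)`. -/
def holonomy (n : ℕ) (β : Fin n → ℝ) (ℓ : Fin n → ℝ) : Matrix (Fin 3) (Fin 3) ℝ :=
  partialProd n β ℓ n

/-!
Lengthening the `i`-th edge of the polygonal path by `t` multiplies the holonomy `G` on the left by
the conjugate `Pᵢ (exp tX) Pᵢ⁻¹`. Since `X = ι (0, 0, 1)` and `ι` is equivariant under `SO(2,1)`,
this conjugate is generated by `ι wᵢ`, so that `dG(v) = ι (∑ vᵢ wᵢ) G`. At a closed path the kernel
and the rank of `dG` are therefore those of `v ↦ ∑ vᵢ wᵢ`.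

`G` takes values in the three-dimensional group `SO(2,1)`, so `1` is not a regular value of `G` as a
map to the space of matrices. Instead one composes `G` with a linear map to `ℝ³` whose vanishing at
`P ∈ SO(2,1)` says that `P = J Pᵀ J = P⁻¹`. Then `(P - 1) (P + 1) = 0`, and `P = 1` as soon as
`P + 1` is invertible. So `G⁻¹(1)` is near `ℓ` the zero set of a map to `ℝ³`, which is a submersion
at `ℓ` when the `wᵢ` span.
-/

open scoped ContDiff Topology

section Submersions

variable {𝕜 E F G : Type*} [RCLike 𝕜] [NormedAddCommGroup E] [NormedSpace 𝕜 E]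
  [NormedAddCommGroup F] [NormedSpace 𝕜 F] [NormedAddCommGroup G] [NormedSpace 𝕜 G]

variable (𝕜) in
/-- `e` is a chart of class `C^n` of `E` around `a`, with inverse of class `C^n`, in which `f` is
the projection to the first factor; it straightens the fibers of `f` into slices `{y} × G`. -/
structure IsSubmersionChart (n : ℕ∞ω) (f : E → F) (a : E)
    (e : OpenPartialHomeomorph E (F × G)) : Prop where
  mem_source : a ∈ e.source
  contDiffOn : ContDiffOn 𝕜 n e e.source
  contDiffOn_symm : ContDiffOn 𝕜 n e.symm e.target
  fst_apply : ∀ x ∈ e.source, (e x).1 = f x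

lemma IsSubmersionChart.restrOpen {n : ℕ∞ω} {f : E → F} {a : E}
    {e : OpenPartialHomeomorph E (F × G)} (he : IsSubmersionChart 𝕜 n f a e)
    {s : Set E} (hs : IsOpen s) (ha : a ∈ s) :
    IsSubmersionChart 𝕜 n f a (e.restrOpen s hs) where
  mem_source := ⟨he.mem_source, ha⟩
  contDiffOn := he.contDiffOn.mono Set.inter_subset_left
  contDiffOn_symm := he.contDiffOn_symm.mono Set.inter_subset_left
  fst_apply x hx := he.fst_apply x hx.1

lemma exists_isSubmersionChart [CompleteSpace E] {n : ℕ∞ω} (hn : n ≠ 0) (hn' : n ≠ ∞)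
    {f : E → F} {a : E} (hf : ContDiffAt 𝕜 n f a) (A : E ≃L[𝕜] F × G)
    (hfA : HasFDerivAt f (.fst 𝕜 F G ∘L (A : E →L[𝕜] F × G)) a) :
    ∃ e : OpenPartialHomeomorph E (F × G), IsSubmersionChart 𝕜 n f a e := by
  let φ : E → F × G := fun x ↦ (f x, (A x).2)
  have hφ : ContDiffAt 𝕜 n φ a := hf.prodMk (contDiff_snd.comp A.contDiff).contDiffAt
  have hφA : HasFDerivAt φ (A : E →L[𝕜] F × G) a :=
    hfA.prodMk (ContinuousLinearMap.snd 𝕜 F G ∘L (A : E →L[𝕜] F × G)).hasFDerivAt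
  let e := hφ.toOpenPartialHomeomorph φ hφA hn
  have ha : a ∈ e.source := hφ.mem_toOpenPartialHomeomorph_source hφA hn
  obtain ⟨S, hS, hSo, haS⟩ := eventually_nhds_iff.1 (hφ.eventually hn')
  obtain ⟨T, hT, hTo, haT⟩ :=
    eventually_nhds_iff.1 ((hφ.to_localInverse hφA hn).eventually hn')
  have hU : IsOpen (S ∩ (e.source ∩ e ⁻¹' T)) := hSo.inter (e.isOpen_inter_preimage hTo)
  exact ⟨e.restrOpen _ hU,
    { mem_source := ⟨ha, haS, ha, haT⟩
      contDiffOn := fun x hx ↦ (hS x hx.2.1).contDiffWithinAt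
      contDiffOn_symm := fun y hy ↦ by
        have hyT : y ∈ T := e.right_inv hy.1 ▸ hy.2.2.2
        exact (hT y hyT).contDiffWithinAt
      fst_apply := fun x _ ↦ rfl }⟩

lemma exists_continuousLinearEquiv_prod_fst_comp_eq [FiniteDimensional 𝕜 E]
    [FiniteDimensional 𝕜 F] [FiniteDimensional 𝕜 G] (f : E →L[𝕜] F)
    (hf : (f : E →ₗ[𝕜] F).range = ⊤)
    (hG : Module.finrank 𝕜 G = Module.finrank 𝕜 E - Module.finrank 𝕜 F) :
    ∃ A : E ≃L[𝕜] F × G, .fst 𝕜 F G ∘L (A : E →L[𝕜] F × G) = f := by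
  have := FiniteDimensional.complete 𝕜 E
  have := FiniteDimensional.complete 𝕜 (F × G)
  have hker : Module.finrank 𝕜 (f : E →ₗ[𝕜] F).ker = Module.finrank 𝕜 G := by
    have hrank := (f : E →ₗ[𝕜] F).finrank_range_add_finrank_ker
    rw [hf, finrank_top] at hrank
    omega
  obtain ⟨q, hq⟩ := f.ker_closedComplemented_of_finiteDimensional_range
  let κ : (f : E →ₗ[𝕜] F).ker ≃L[𝕜] G := .ofFinrankEq hker
  let p : E →L[𝕜] G := κ ∘L q
  have hp_range : (p : E →ₗ[𝕜] G).range = ⊤ :=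
    LinearMap.range_eq_top.2 fun y ↦ ⟨κ.symm y, by simp [p, hq]⟩
  have hp_ker : (p : E →ₗ[𝕜] G).ker = (q : E →ₗ[𝕜] (f : E →ₗ[𝕜] F).ker).ker := by
    ext; simp [p]
  have hcompl : IsCompl (f : E →ₗ[𝕜] F).ker (p : E →ₗ[𝕜] G).ker :=
    hp_ker ▸ LinearMap.isCompl_of_proj (f := (q : E →ₗ[𝕜] (f : E →ₗ[𝕜] F).ker)) hq
  exact ⟨f.equivProdOfSurjectiveOfIsCompl p hf hp_range hcompl, rfl⟩

end Submersions

section Curves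

variable {E F G : Type*} [NormedAddCommGroup E] [NormedSpace ℝ E]
  [NormedAddCommGroup F] [NormedSpace ℝ F] [NormedAddCommGroup G] [NormedSpace ℝ G]

lemma exists_contDiff_curve_mem {p : E} {S : Set E} (hS : S ∈ 𝓝 p) (v : E) :
    ∃ γ : ℝ → E, ContDiff ℝ ω γ ∧ γ 0 = p ∧ (∀ t, γ t ∈ S) ∧ HasDerivAt γ v 0 := by
  have hline : Filter.Tendsto (fun s : ℝ ↦ p + s • v) (𝓝 0) (𝓝 p) :=
    Continuous.tendsto' (by fun_prop) _ _ (by simp)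
  obtain ⟨c, hc, hcS⟩ := Metric.nhds_basis_closedBall.mem_iff.1 (hline hS)
  -- A bounded reparametrization of the line, with unit speed at `0`, never leaves `S`.
  let s : ℝ → ℝ := fun t ↦ c * sin (t / c)
  have hs : ContDiff ℝ ω s :=
    contDiff_const.mul (Real.contDiff_sin.comp (contDiff_id.div_const c))
  have hs' : HasDerivAt s 1 0 :=
    (((hasDerivAt_id (0 : ℝ)).div_const c).sin.const_mul c).congr_deriv <| by
      simp [hc.ne']
  refine ⟨fun t ↦ p + s t • v, contDiff_const.add (hs.smul contDiff_const), by simp [s],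
    fun t ↦ hcS ?_, by simpa using (hs'.smul_const v).const_add p⟩
  rw [mem_closedBall_zero_iff, norm_mul, Real.norm_of_nonneg hc.le]
  exact mul_le_of_le_one_right hc.le (abs_sin_le_one _)

lemma IsSubmersionChart.exists_curve_in_fiber {n : ℕ∞ω} (hn : n ≠ 0) {f : E → F} {a : E}
    {e : OpenPartialHomeomorph E (F × G)} (he : IsSubmersionChart ℝ n f a e) {f' : E →L[ℝ] F}
    (hf' : HasFDerivAt f f' a) {v : E} (hv : f' v = 0) :
    ∃ γ : ℝ → E, ContDiff ℝ n γ ∧ γ 0 = a ∧ (∀ t, γ t ∈ e.source ∧ f (γ t) = f a) ∧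
      HasDerivAt γ v 0 := by
  have hsource : e.source ∈ 𝓝 a := e.open_source.mem_nhds he.mem_source
  have htarget : e.target ∈ 𝓝 (e a) := e.open_target.mem_nhds (e.map_source he.mem_source)
  have hea : e a = (f a, (e a).2) := Prod.ext (he.fst_apply a he.mem_source) rfl
  obtain ⟨e', he'⟩ := (he.contDiffOn.contDiffAt hsource).differentiableAt hn
  obtain ⟨i', hi'⟩ := (he.contDiffOn_symm.contDiffAt htarget).differentiableAt hn
  have he'_fst : (e' v).1 = 0 := by
    have hfst : f =ᶠ[𝓝 a] fun x ↦ (e x).1 :=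
      Filter.eventually_of_mem hsource fun x hx ↦ (he.fst_apply x hx).symm
    rw [← hv, ← (he'.fst.congr_of_eventuallyEq hfst).unique hf', ContinuousLinearMap.comp_apply,
      ContinuousLinearMap.coe_fst']
  have hi'e' : i' (e' v) = v := by
    have hid : e.symm ∘ e =ᶠ[𝓝 a] id := e.eventually_left_inverse he.mem_source
    exact DFunLike.congr_fun
      (((hi'.comp a he').congr_of_eventuallyEq hid.symm).unique (hasFDerivAt_id a)) v
  have hslice : {y : G | (f a, y) ∈ e.target} ∈ 𝓝 (e a).2 :=
    (Continuous.prodMk_right (f a)).continuousAt.preimage_mem_nhds (hea ▸ htarget)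
  obtain ⟨c, hc, hc0, hcmem, hc'⟩ := exists_contDiff_curve_mem hslice (e' v).2
  have hg0 : (f a, c 0) = e a := by rw [hc0, ← hea]
  have hg' : HasDerivAt (fun t ↦ (f a, c t)) (e' v) 0 :=
    ((hasDerivAt_const 0 (f a)).prodMk hc').congr_deriv (Prod.ext he'_fst.symm rfl)
  refine ⟨fun t ↦ e.symm (f a, c t), ?_, ?_, fun t ↦ ?_, ?_⟩
  · exact he.contDiffOn_symm.comp_contDiff (contDiff_const.prodMk (hc.of_le le_top)) hcmem
  · simpa only [hg0] using e.left_inv he.mem_source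
  · have hmem := e.map_target (hcmem t)
    exact ⟨hmem, by rw [← he.fst_apply _ hmem, e.right_inv (hcmem t)]⟩
  · rw [← hi'e']
    exact HasFDerivAt.comp_hasDerivAt 0 (hg0 ▸ hi') hg'

lemma apply_eq_zero_of_const_along_curve {f : E → F} {f' : E →L[ℝ] F} {γ : ℝ → E} {v : E} {t : ℝ}
    {y : F} (hf : HasFDerivAt f f' (γ t)) (hγ : HasDerivAt γ v t) (hconst : ∀ s, f (γ s) = y) :
    f' v = 0 := by
  have hcomp : HasDerivAt (fun s ↦ f (γ s)) (f' v) t := hf.comp_hasDerivAt t hγ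
  simp only [hconst] at hcomp
  exact hcomp.unique (hasDerivAt_const t y)

end Curves

section Lorentz

variable {R : Type*} [CommRing R]

/-- The Gram matrix of the Minkowski form `-x₀y₀ + x₁y₁ + x₂y₂`. -/
def minkowskiMatrix (R : Type*) [CommRing R] : Matrix (Fin 3) (Fin 3) R :=
  diagonal ![-1, 1, 1]

lemma minkowskiMatrix_mul_self : minkowskiMatrix R * minkowskiMatrix R = 1 := by
  rw [minkowskiMatrix, diagonal_mul_diagonal, ← diagonal_one]
  congr 1
  ext i
  fin_cases i <;> simp

/-- The special Lorentz group `SO(2,1)`, as the submonoid of the matrices of determinant `1` that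
preserve the Minkowski form. -/
def specialLorentz (R : Type*) [CommRing R] : Submonoid (Matrix (Fin 3) (Fin 3) R) where
  carrier := {P | Pᵀ * minkowskiMatrix R * P = minkowskiMatrix R ∧ P.det = 1}
  one_mem' := by simp
  mul_mem' := by
    rintro P Q ⟨hP, hP'⟩ ⟨hQ, hQ'⟩
    refine ⟨?_, by rw [det_mul, hP', hQ', one_mul]⟩
    calc (P * Q)ᵀ * minkowskiMatrix R * (P * Q)
        = Qᵀ * (Pᵀ * minkowskiMatrix R * P) * Q := by
          simp only [transpose_mul, Matrix.mul_assoc]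
      _ = minkowskiMatrix R := by rw [hP, hQ]

/-- The isomorphism `ι` of `R³`, with the Minkowski cross product `u ⊠ w = J (u × w)`, onto the Lie
algebra `so(2,1)`: `lorentzHat u` is the matrix of `u ⊠ ·`. -/
def lorentzHat : (Fin 3 → R) →ₗ[R] Matrix (Fin 3) (Fin 3) R :=
  LinearMap.mulLeft R (minkowskiMatrix R) ∘ₗ LinearMap.toMatrix'.toLinearMap ∘ₗ crossProduct

lemma lorentzHat_apply (u : Fin 3 → R) :
    lorentzHat u = !![0, u 2, -u 1; u 2, 0, -u 0; -u 1, u 0, 0] := by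
  ext i j
  fin_cases i <;> fin_cases j <;>
    simp [lorentzHat, minkowskiMatrix, LinearMap.toMatrix'_apply, cross_apply]

lemma lorentzHat_mulVec (u v : Fin 3 → R) :
    lorentzHat u *ᵥ v = minkowskiMatrix R *ᵥ (u ⨯₃ v) := by
  simp [lorentzHat, ← mulVec_mulVec, LinearMap.toMatrix'_mulVec]

lemma mulVec_cross_mulVec (P : Matrix (Fin 3) (Fin 3) R) (u v : Fin 3 → R) :
    (P *ᵥ u) ⨯₃ (P *ᵥ v) = P.adjugateᵀ *ᵥ (u ⨯₃ v) := by
  ext i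
  fin_cases i <;>
    simp [cross_apply, adjugate_fin_three, mulVec, dotProduct, Fin.sum_univ_three] <;> ring

lemma minkowskiMatrix_mul_adjugate_transpose {P : Matrix (Fin 3) (Fin 3) R}
    (hP : P ∈ specialLorentz R) :
    minkowskiMatrix R * P.adjugateᵀ = P * minkowskiMatrix R := by
  have hadj : P.adjugateᵀ * Pᵀ = 1 := by
    rw [← transpose_mul, mul_adjugate, hP.2, one_smul, transpose_one]
  calc minkowskiMatrix R * P.adjugateᵀ
      = minkowskiMatrix R * P.adjugateᵀ *
          ((Pᵀ * minkowskiMatrix R * P) * minkowskiMatrix R) := by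
        rw [hP.1, minkowskiMatrix_mul_self, mul_one]
    _ = minkowskiMatrix R * (P.adjugateᵀ * Pᵀ) * minkowskiMatrix R * P * minkowskiMatrix R := by
        simp only [Matrix.mul_assoc]
    _ = P * minkowskiMatrix R := by
        rw [hadj, mul_one, minkowskiMatrix_mul_self, one_mul]

lemma mul_lorentzHat {P : Matrix (Fin 3) (Fin 3) R} (hP : P ∈ specialLorentz R) (u : Fin 3 → R) :
    P * lorentzHat u = lorentzHat (P *ᵥ u) * P := by
  refine ext_of_mulVec_single fun i ↦ ?_
  simp only [← mulVec_mulVec, lorentzHat_mulVec, mulVec_cross_mulVec]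
  simp only [mulVec_mulVec, minkowskiMatrix_mul_adjugate_transpose hP]

/-- The coordinates, under `lorentzHat`, of `M - J Mᵀ J`. This is twice the `so(2,1)`-component of
`M`; dropping the factor `1 / 2` keeps the definition valid over any ring. -/
def lorentzVee : Matrix (Fin 3) (Fin 3) R →ₗ[R] (Fin 3 → R) where
  toFun M := ![M 2 1 - M 1 2, -(M 2 0 + M 0 2), M 0 1 + M 1 0]
  map_add' M N := by ext i; fin_cases i <;> simp <;> ring
  map_smul' c M := by ext i; fin_cases i <;> simp <;> ring

lemma lorentzHat_lorentzVee (M : Matrix (Fin 3) (Fin 3) R) :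
    lorentzHat (lorentzVee M) = M - minkowskiMatrix R * Mᵀ * minkowskiMatrix R := by
  ext i j
  fin_cases i <;> fin_cases j <;> simp [lorentzHat_apply, lorentzVee, minkowskiMatrix] <;> ring

lemma lorentzVee_lorentzHat (u : Fin 3 → R) : lorentzVee (lorentzHat u) = (2 : R) • u := by
  ext i
  fin_cases i <;> simp [lorentzHat_apply, lorentzVee] <;> ring

lemma lorentzVee_one : lorentzVee (1 : Matrix (Fin 3) (Fin 3) R) = 0 := by
  ext i
  fin_cases i <;> simp [lorentzVee]

lemma lorentzHat_injective : Function.Injective (lorentzHat (R := R)) := by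
  intro u v huv
  simp only [lorentzHat_apply] at huv
  ext i
  fin_cases i
  · simpa using congr_fun₂ huv 2 1
  · simpa using congr_fun₂ huv 2 0
  · simpa using congr_fun₂ huv 0 1

lemma eq_one_iff_lorentzVee_eq_zero {P : Matrix (Fin 3) (Fin 3) R} (hP : P ∈ specialLorentz R)
    (hdet : IsUnit (P + 1).det) : P = 1 ↔ lorentzVee P = 0 := by
  refine ⟨fun h ↦ h ▸ lorentzVee_one, fun h ↦ ?_⟩
  have hself : P = minkowskiMatrix R * Pᵀ * minkowskiMatrix R := by
    rw [← sub_eq_zero, ← lorentzHat_lorentzVee, h, map_zero]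
  have hsq : P * P = 1 := by
    nth_rw 1 [hself]
    rw [Matrix.mul_assoc, Matrix.mul_assoc, ← Matrix.mul_assoc Pᵀ, hP.1, minkowskiMatrix_mul_self]
  have hfactor : (P - 1) * (P + 1) = 0 := by
    rw [(Commute.one_right P).mul_self_sub_mul_self_eq'.symm]
    simp [hsq]
  rw [← sub_eq_zero]
  exact ((isUnit_iff_isUnit_det _).2 hdet).mul_left_eq_zero.1 hfactor

end Lorentz

section MatrixCalculus

variable {𝕜 : Type*} [NontriviallyNormedField 𝕜] [CompleteSpace 𝕜]
  {E : Type*} [NormedAddCommGroup E] [NormedSpace 𝕜 E] {m : Type*} [Fintype m]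

/-- Multiplication of square matrices as a continuous bilinear map. The entrywise norm is not
submultiplicative, so the product rules for normed rings do not apply. -/
def matrixMulL (𝕜 m : Type*) [NontriviallyNormedField 𝕜] [CompleteSpace 𝕜] [Fintype m] :
    Matrix m m 𝕜 →L[𝕜] Matrix m m 𝕜 →L[𝕜] Matrix m m 𝕜 :=
  LinearMap.toContinuousBilinearMap (LinearMap.mul 𝕜 (Matrix m m 𝕜))

lemma hasDerivAt_matrix_mul {f g : 𝕜 → Matrix m m 𝕜} {f' g' : Matrix m m 𝕜} {x : 𝕜}
    (hf : HasDerivAt f f' x) (hg : HasDerivAt g g' x) :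
    HasDerivAt (fun t ↦ f t * g t) (f x * g' + f' * g x) x :=
  (matrixMulL 𝕜 m).hasDerivAt_of_bilinear (fun _ ↦ hf) (fun _ ↦ hg)

lemma contDiff_matrix_mul {n : ℕ∞ω} {f g : E → Matrix m m 𝕜} (hf : ContDiff 𝕜 n f)
    (hg : ContDiff 𝕜 n g) : ContDiff 𝕜 n (fun x ↦ f x * g x) :=
  (matrixMulL 𝕜 m).isBoundedBilinearMap.contDiff.comp (hf.prodMk hg)

end MatrixCalculus

section Holonomy

lemma Bmat_eq (t : ℝ) : Bmat t = !![cosh t, sinh t, 0; sinh t, cosh t, 0; 0, 0, 1] := rfl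

lemma Rmat_eq (θ : ℝ) : Rmat θ = !![1, 0, 0; 0, cos θ, -sin θ; 0, sin θ, cos θ] := rfl

lemma Xmat_eq : Xmat = !![0, 1, 0; 1, 0, 0; 0, 0, 0] := rfl

lemma Bmat_mem_specialLorentz (t : ℝ) : Bmat t ∈ specialLorentz ℝ := by
  have hcosh := Real.cosh_sq t
  rw [Bmat_eq]
  constructor
  · ext i j
    fin_cases i <;> fin_cases j <;>
      simp [minkowskiMatrix, Matrix.mul_apply, Fin.sum_univ_three] <;> grind
  · simp [det_fin_three, ← sq]

lemma Rmat_mem_specialLorentz (θ : ℝ) : Rmat θ ∈ specialLorentz ℝ := by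
  have hsin := Real.sin_sq_add_cos_sq θ
  rw [Rmat_eq]
  constructor
  · ext i j
    fin_cases i <;> fin_cases j <;>
      simp [minkowskiMatrix, Matrix.mul_apply, Fin.sum_univ_three] <;> grind
  · simp [det_fin_three, ← sq]

lemma lorentzHat_eq_Xmat : lorentzHat ![0, 0, 1] = Xmat := by
  simp [lorentzHat_apply, Xmat_eq]

lemma hasDerivAt_Bmat (t : ℝ) : HasDerivAt Bmat (Xmat * Bmat t) t := by
  refine hasDerivAt_pi.2 fun i ↦ hasDerivAt_pi.2 fun j ↦ ?_
  simp only [Bmat_eq, Xmat_eq]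
  fin_cases i <;> fin_cases j <;>
    simp [Matrix.mul_apply, Fin.sum_univ_three, hasDerivAt_const,
      Real.hasDerivAt_cosh, Real.hasDerivAt_sinh]

lemma contDiff_Bmat {n : ℕ∞ω} : ContDiff ℝ n Bmat := by
  refine contDiff_pi.2 fun i ↦ contDiff_pi.2 fun j ↦ ?_
  fin_cases i <;> fin_cases j <;>
    simp [Bmat, contDiff_const, Real.contDiff_cosh, Real.contDiff_sinh]

variable {n : ℕ} {β ℓ : Fin n → ℝ}

lemma partialProd_succ {k : ℕ} (hk : k < n) :
    partialProd n β ℓ (k + 1) =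
      partialProd n β ℓ k * (Bmat (ℓ ⟨k, hk⟩) * Rmat (π - β ⟨k, hk⟩)) := by
  rw [partialProd, dif_pos hk]

lemma partialProd_mem_specialLorentz {k : ℕ} (hk : k ≤ n) :
    partialProd n β ℓ k ∈ specialLorentz ℝ := by
  induction k with
  | zero => exact one_mem _
  | succ k ih =>
    rw [partialProd_succ hk]
    exact mul_mem (ih (Nat.le_of_succ_le hk))
      (mul_mem (Bmat_mem_specialLorentz _) (Rmat_mem_specialLorentz _))

lemma contDiff_partialProd {m : ℕ∞ω} {k : ℕ} (hk : k ≤ n) :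
    ContDiff ℝ m fun ℓ ↦ partialProd n β ℓ k := by
  induction k with
  | zero => exact contDiff_const
  | succ k ih =>
    simp only [partialProd_succ hk]
    exact contDiff_matrix_mul (ih (Nat.le_of_succ_le hk))
      (contDiff_matrix_mul (contDiff_Bmat.comp (contDiff_apply ℝ ℝ _)) contDiff_const)

/-- The de Sitter polar `wᵢ` of the `i`-th edge of the polygonal path. -/
def edgePolar (n : ℕ) (β ℓ : Fin n → ℝ) (i : Fin n) : Fin 3 → ℝ :=
  partialProd n β ℓ i *ᵥ ![0, 0, 1]

lemma partialProd_mul_Xmat (i : Fin n) :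
    partialProd n β ℓ i * Xmat = lorentzHat (edgePolar n β ℓ i) * partialProd n β ℓ i := by
  rw [← lorentzHat_eq_Xmat, mul_lorentzHat (partialProd_mem_specialLorentz i.2.le), edgePolar]

lemma hasDerivAt_partialProd {c : ℝ → Fin n → ℝ} {v : Fin n → ℝ} {t : ℝ} (hc : HasDerivAt c v t)
    {k : ℕ} (hk : k ≤ n) :
    HasDerivAt (fun s ↦ partialProd n β (c s) k)
      (lorentzHat (∑ i : Fin k, v (i.castLE hk) • edgePolar n β (c t) (i.castLE hk)) *
        partialProd n β (c t) k) t := by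
  induction k with
  | zero => exact (hasDerivAt_const t (1 : Matrix (Fin 3) (Fin 3) ℝ)).congr_deriv (by simp)
  | succ k ih =>
    let i : Fin n := ⟨k, hk⟩
    have hB : HasDerivAt (fun s ↦ Bmat (c s i)) (v i • (Xmat * Bmat (c t i))) t :=
      (hasDerivAt_Bmat _).scomp t (hasDerivAt_pi.1 hc i)
    have hstep := hasDerivAt_matrix_mul (ih (Nat.le_of_succ_le hk))
      (hasDerivAt_matrix_mul hB (hasDerivAt_const t (Rmat (π - β i))))
    simp only [partialProd_succ hk]
    refine hstep.congr_deriv ?_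
    have hlast : partialProd n β (c t) k *
          (Bmat (c t i) * 0 + v i • (Xmat * Bmat (c t i)) * Rmat (π - β i)) =
        v i • lorentzHat (edgePolar n β (c t) i) *
          (partialProd n β (c t) k * (Bmat (c t i) * Rmat (π - β i))) := by
      have hX : partialProd n β (c t) k * Xmat =
          lorentzHat (edgePolar n β (c t) i) * partialProd n β (c t) k := partialProd_mul_Xmat i
      simp only [mul_zero, zero_add, Matrix.smul_mul, Matrix.mul_smul]
      rw [← Matrix.mul_assoc, ← Matrix.mul_assoc, hX]
      simp only [Matrix.mul_assoc]
    rw [Fin.sum_univ_castSucc, map_add, map_smul, add_mul, add_comm]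
    exact congrArg₂ (· + ·) (Matrix.mul_assoc _ _ _) hlast

section Derivative

variable {D : (Fin n → ℝ) →L[ℝ] Matrix (Fin 3) (Fin 3) ℝ}

lemma fderiv_holonomy_apply (hD : HasFDerivAt (holonomy n β) D ℓ) (v : Fin n → ℝ) :
    D v = lorentzHat (∑ i, v i • edgePolar n β ℓ i) * holonomy n β ℓ := by
  have hline : HasDerivAt (fun t : ℝ ↦ ℓ + t • v) v 0 := by
    simpa using ((hasDerivAt_id (0 : ℝ)).smul_const v).const_add ℓ
  have hℓ : ℓ + (0 : ℝ) • v = ℓ := by simp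
  have hcomp : HasDerivAt (fun t : ℝ ↦ holonomy n β (ℓ + t • v)) (D v) 0 :=
    hD.hasLineDerivAt v
  have hunique := hcomp.unique (hasDerivAt_partialProd hline le_rfl)
  rw [hℓ] at hunique
  exact hunique

lemma fderiv_holonomy_eq_comp (hℓ : holonomy n β ℓ = 1) (hD : HasFDerivAt (holonomy n β) D ℓ) :
    (D : (Fin n → ℝ) →ₗ[ℝ] Matrix (Fin 3) (Fin 3) ℝ) =
      lorentzHat ∘ₗ Fintype.linearCombination ℝ (edgePolar n β ℓ) := by
  refine LinearMap.ext fun v ↦ ?_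
  rw [ContinuousLinearMap.coe_coe, fderiv_holonomy_apply hD, hℓ, mul_one, LinearMap.comp_apply,
    Fintype.linearCombination_apply]

lemma fderiv_holonomy_eq_zero_iff (hℓ : holonomy n β ℓ = 1)
    (hD : HasFDerivAt (holonomy n β) D ℓ) (v : Fin n → ℝ) :
    D v = 0 ↔ ∑ i, v i • edgePolar n β ℓ i = 0 := by
  rw [fderiv_holonomy_apply hD, hℓ, mul_one, map_eq_zero_iff _ lorentzHat_injective]

lemma finrank_range_fderiv_holonomy (hℓ : holonomy n β ℓ = 1)
    (hD : HasFDerivAt (holonomy n β) D ℓ)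
    (hspan : Submodule.span ℝ (Set.range (edgePolar n β ℓ)) = ⊤) :
    Module.finrank ℝ (D : (Fin n → ℝ) →ₗ[ℝ] Matrix (Fin 3) (Fin 3) ℝ).range = 3 := by
  rw [fderiv_holonomy_eq_comp hℓ hD, LinearMap.range_comp, Fintype.range_linearCombination, hspan,
    Submodule.map_top, LinearMap.finrank_range_of_inj lorentzHat_injective, Module.finrank_fin_fun]

lemma hasFDerivAt_lorentzVee_holonomy (hD : HasFDerivAt (holonomy n β) D ℓ) :
    HasFDerivAt (fun x ↦ lorentzVee (holonomy n β x)) (lorentzVee.toContinuousLinearMap ∘L D) ℓ :=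
  (lorentzVee (R := ℝ)).toContinuousLinearMap.hasFDerivAt.comp ℓ hD

lemma range_lorentzVee_comp_fderiv_holonomy (hℓ : holonomy n β ℓ = 1)
    (hD : HasFDerivAt (holonomy n β) D ℓ)
    (hspan : Submodule.span ℝ (Set.range (edgePolar n β ℓ)) = ⊤) :
    (lorentzVee.toContinuousLinearMap ∘L D : (Fin n → ℝ) →ₗ[ℝ] Fin 3 → ℝ).range = ⊤ := by
  have hcomp : (lorentzVee.toContinuousLinearMap ∘L D : (Fin n → ℝ) →ₗ[ℝ] Fin 3 → ℝ) =
      (2 : ℝ) • Fintype.linearCombination ℝ (edgePolar n β ℓ) := by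
    refine LinearMap.ext fun v ↦ ?_
    have hDv := DFunLike.congr_fun (fderiv_holonomy_eq_comp hℓ hD) v
    exact (congrArg lorentzVee hDv).trans (lorentzVee_lorentzHat _)
  rw [hcomp, LinearMap.range_smul _ _ two_ne_zero, Fintype.range_linearCombination, hspan]

lemma isOpen_setOf_isUnit_det_holonomy_add_one :
    IsOpen {x | IsUnit (holonomy n β x + 1).det} := by
  have hcont : Continuous (holonomy n β) :=
    (contDiff_partialProd (m := 0) le_rfl).continuous
  simp only [isUnit_iff_ne_zero]
  exact isOpen_ne_fun (hcont.add continuous_const).matrix_det continuous_const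

lemma exists_isSubmersionChart_holonomy (hℓ : holonomy n β ℓ = 1)
    (hD : HasFDerivAt (holonomy n β) D ℓ)
    (hspan : Submodule.span ℝ (Set.range (edgePolar n β ℓ)) = ⊤) :
    ∃ e : OpenPartialHomeomorph (Fin n → ℝ) ((Fin 3 → ℝ) × (Fin (n - 3) → ℝ)),
      IsSubmersionChart ℝ ω (fun x ↦ lorentzVee (holonomy n β x)) ℓ e ∧
        ∀ x ∈ e.source, holonomy n β x = 1 ↔ lorentzVee (holonomy n β x) = 0 := by
  obtain ⟨A, hA⟩ := exists_continuousLinearEquiv_prod_fst_comp_eq (G := Fin (n - 3) → ℝ)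
    (lorentzVee.toContinuousLinearMap ∘L D)
    (range_lorentzVee_comp_fderiv_holonomy hℓ hD hspan) (by simp)
  have hsmooth : ContDiff ℝ ω fun x ↦ lorentzVee (holonomy n β x) :=
    (lorentzVee (R := ℝ)).toContinuousLinearMap.contDiff.comp (contDiff_partialProd le_rfl)
  obtain ⟨e, he⟩ := exists_isSubmersionChart (by simp) (by simp) hsmooth.contDiffAt A
    (hA ▸ hasFDerivAt_lorentzVee_holonomy hD)
  have hdet : IsUnit (holonomy n β ℓ + 1).det := by
    simp [hℓ, ← two_smul ℝ]
  exact ⟨_, he.restrOpen isOpen_setOf_isUnit_det_holonomy_add_one hdet, fun x hx ↦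
    eq_one_iff_lorentzVee_eq_zero (partialProd_mem_specialLorentz le_rfl) hx.2⟩

end Derivative

end Holonomy

/-- The space of polygons with given angles is a smooth submanifold of `ℝⁿ` of
codimension three: at a closed polygonal path (`G ℓ = 1`), the kernel of the
derivative `D` of the holonomy `G` is `{ℓ̇ | ∑ ℓ̇ i • wᵢ = 0}` where the `wᵢ` are the
de Sitter polars of the edges, and if the `wᵢ` span `ℝ³` then `D` has rank `3` and
`G⁻¹(1)` is, near `ℓ`, a smooth submanifold of dimension `n - 3` whose tangent space
at `ℓ` is `{ℓ̇ | ∑ ℓ̇ i • wᵢ = 0}`. -/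
theorem polygon_space_submanifold (n : ℕ) (hn : 3 ≤ n) (β : Fin n → ℝ)
    (ℓ : Fin n → ℝ) (hℓ : holonomy n β ℓ = 1)
    (w : Fin n → Fin 3 → ℝ)
    (hw : ∀ i : Fin n, w i = (partialProd n β ℓ i).mulVec ![0, 0, 1])
    (D : (Fin n → ℝ) →L[ℝ] Matrix (Fin 3) (Fin 3) ℝ)
    (hD : HasFDerivAt (holonomy n β) D ℓ) :
    -- (a) the kernel of the derivative of the holonomy
    (∀ ℓ' : Fin n → ℝ, D ℓ' = 0 ↔ ∑ i, ℓ' i • w i = 0) ∧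
    -- (b) if the polars span ℝ³:
    (Submodule.span ℝ (Set.range w) = ⊤ →
      -- D has rank 3
      Module.finrank ℝ
        (LinearMap.range (D : (Fin n → ℝ) →ₗ[ℝ] Matrix (Fin 3) (Fin 3) ℝ)) = 3 ∧
      -- near ℓ, G⁻¹(1) is a smooth submanifold of dimension n - 3:
      -- there is a smooth chart of ℝⁿ around ℓ flattening it onto a slice
      -- {0} × ℝ^(n-3)
      (∃ (U : Set (Fin n → ℝ)) (V : Set ((Fin 3 → ℝ) × (Fin (n - 3) → ℝ)))
        (φ : (Fin n → ℝ) → (Fin 3 → ℝ) × (Fin (n - 3) → ℝ))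
        (ψ : (Fin 3 → ℝ) × (Fin (n - 3) → ℝ) → (Fin n → ℝ)),
        IsOpen U ∧ ℓ ∈ U ∧ IsOpen V ∧
        ContDiffOn ℝ (⊤ : ℕ∞) φ U ∧ ContDiffOn ℝ (⊤ : ℕ∞) ψ V ∧
        Set.BijOn φ U V ∧ (∀ x ∈ U, ψ (φ x) = x) ∧
        (∀ x ∈ U, (holonomy n β x = 1 ↔ (φ x).1 = 0))) ∧
      -- and its tangent space at ℓ is {ℓ̇ | ∑ ℓ̇ i • wᵢ = 0}
      (∀ ℓ' : Fin n → ℝ, (∑ i, ℓ' i • w i = 0) ↔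
        ∃ γ : ℝ → Fin n → ℝ, ContDiff ℝ (⊤ : ℕ∞) γ ∧ γ 0 = ℓ ∧
          (∀ t, holonomy n β (γ t) = 1) ∧ HasDerivAt γ ℓ' 0)) := by
  obtain rfl : w = edgePolar n β ℓ := funext hw
  refine ⟨fderiv_holonomy_eq_zero_iff hℓ hD, fun hspan ↦ ?_⟩
  obtain ⟨e, he, he_one⟩ := exists_isSubmersionChart_holonomy hℓ hD hspan
  refine ⟨finrank_range_fderiv_holonomy hℓ hD hspan, ?_, fun v ↦ ?_⟩
  · exact ⟨e.source, e.target, e, e.symm, e.open_source, he.mem_source, e.open_target,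
      he.contDiffOn.of_le le_top, he.contDiffOn_symm.of_le le_top, e.bijOn,
      fun x hx ↦ e.left_inv hx, fun x hx ↦ by rw [he_one x hx, he.fst_apply x hx]⟩
  · rw [← fderiv_holonomy_eq_zero_iff hℓ hD]
    constructor
    · intro hv
      obtain ⟨γ, hγ, hγ0, hfiber, hγ'⟩ := he.exists_curve_in_fiber (by simp)
        (hasFDerivAt_lorentzVee_holonomy hD) (v := v) (by simp [hv])
      refine ⟨γ, hγ.of_le le_top, hγ0, fun t ↦ ?_, hγ'⟩
      rw [he_one _ (hfiber t).1, (hfiber t).2, ← he_one ℓ he.mem_source, hℓ]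
    · rintro ⟨γ, -, rfl, hclosed, hγ'⟩
      exact apply_eq_zero_of_const_along_curve hD hγ' hclosed
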